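/- arXiv:2310.04137 — 2 statements merged into one kernel-verified Lean document; each statement's English description precedes it below -/
import Mathlib

section
/- Let p_1 < p_2 < ... < p_n be distinct Pythagorean primes and N = p_1 p_2 ⋯ p_n. Let z be a unit of Z_N, and let T ⊆ {1, ..., n} be the (nonempty) set of indices j for which the reduction of z modulo p_j is a quadratic non-residue modulo p_j (so z reduces to a nonzero quadratic residue modulo p_j for j ∉ T). Then the number of ordered pairs (a, b) with a, b ∈ QR_N and a − b = z equals (1/4ⁿ)·∏_{j ∈ T}(p_j − 1)·∏_{j ∉ T}(p_j − 5). -/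
/-!
By the Chinese remainder theorem `ZMod N` is the product of the fields `ZMod (p i)`, and an element
of `ZMod N` lies in `QRset N` iff each of its components is a nonzero square. The pairs counted are
determined by `b`, so the count is the product over `i` of the local counts
`#{b | b and b + w are nonzero squares in ZMod (p i)}`, where `w` is the `i`-th component of `z`.

For the local count, let `χ` be the quadratic character of `ZMod q` with `q ≡ 1 (mod 4)` and put
`e = χ w = ±1`. The function `χ² + χ` is twice the indicator of the nonzero squares, so after the
substitution `b = -w x` (using `χ (-1) = 1`) four times the local count is
`∑ x, (χ² x + e χ x) (χ² (1 - x) + e χ (1 - x))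
  = J(1, 1) + e J(1, χ) + e J(χ, 1) + e² J(χ, χ) = (q - 2) - 2 e - 1`,
which is `q - 5` if `w` is a square and `q - 1` otherwise (`card_local`).
-/

/-- `QRset M` is the set of quadratic residues among the units of `ZMod M`:
units that are squares of units. -/
def QRset (M : ℕ) : Set (ZMod M) := {u | ∃ x : ZMod M, IsUnit x ∧ x ^ 2 = u}

/-- For a prime `q`, `QRp q` is the set of nonzero quadratic residues mod `q`. -/
def QRp (q : ℕ) : Set (ZMod q) := {z | z ≠ 0 ∧ IsSquare z}

/-- The Paley-type graph on `ZMod M`: `a` and `b` are adjacent iff `a - b ∈ QRset M`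
(symmetrized; when `-1 ∈ QRset M` this relation is already symmetric). -/
def paleyType (M : ℕ) : SimpleGraph (ZMod M) :=
  SimpleGraph.fromRel (fun a b => a - b ∈ QRset M)

/-- The `b` in `ZMod q` for which both `b` and `b + w` are nonzero squares. -/
def localSet (q : ℕ) (w : ZMod q) : Set (ZMod q) := {b | b ∈ QRp q ∧ b + w ∈ QRp q}

lemma quadraticChar_sq_add_self {q : ℕ} [Fact q.Prime] (a : ZMod q) [Decidable (a ∈ QRp q)] :
    (quadraticChar (ZMod q) a) ^ 2 + quadraticChar (ZMod q) a = if a ∈ QRp q then 2 else 0 := by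
  by_cases ha : a = 0
  · simp [ha, QRp]
  by_cases hs : IsSquare a
  · rw [(quadraticChar_one_iff_isSquare ha).2 hs]
    simp [QRp, ha, hs]
  · rw [quadraticChar_neg_one_iff_not_isSquare.2 hs]
    simp [QRp, hs]

/-- The local count, expressed by the quadratic character of the difference `w`. -/
lemma card_local {q : ℕ} [Fact q.Prime] (h4 : q % 4 = 1) (w : ZMod q) (hw : w ≠ 0) :
    4 * ((localSet q w).ncard : ℤ) = q - 3 - 2 * quadraticChar (ZMod q) w := by
  classical
  set χ := quadraticChar (ZMod q) with hχ
  have hchar : ringChar (ZMod q) ≠ 2 := by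
    rw [ZMod.ringChar_zmod_n]; omega
  have hne : χ ≠ 1 := quadraticChar_ne_one hchar
  have hinv : χ⁻¹ = χ := (quadraticChar_isQuadratic (ZMod q)).inv
  have hsq : χ ^ 2 = 1 := (quadraticChar_isQuadratic (ZMod q)).sq_eq_one
  have hneg : χ (-1) = 1 := by
    rw [hχ, quadraticChar_one_iff_isSquare (by simp), FiniteField.isSquare_neg_one_iff, ZMod.card]
    omega
  have he : χ w ^ 2 = 1 := quadraticChar_sq_one hw
  have hone : ∀ x, χ x ^ 2 = (1 : MulChar (ZMod q) ℤ) x := by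
    intro x
    rw [← hsq, MulChar.pow_apply' _ two_ne_zero]
  have h11 : jacobiSum (1 : MulChar (ZMod q) ℤ) 1 = q - 2 := by
    rw [jacobiSum_one_one, ZMod.card]
  have h1χ : jacobiSum 1 χ = -1 := jacobiSum_one_nontrivial hne
  have hχ1 : jacobiSum χ 1 = -1 := by rw [jacobiSum_comm, h1χ]
  have hχχ : jacobiSum χ χ = -1 := by
    have := jacobiSum_nontrivial_inv hne
    rwa [hinv, hneg] at this
  have hcount : 4 * ((localSet q w).ncard : ℤ)
      = ∑ b : ZMod q, (χ b ^ 2 + χ b) * (χ (b + w) ^ 2 + χ (b + w)) := by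
    have h1 : (localSet q w).ncard
        = (Finset.univ.filter fun b : ZMod q => b ∈ QRp q ∧ b + w ∈ QRp q).card := by
      rw [← Set.ncard_coe_finset]; congr 1; ext b; simp [localSet]
    rw [h1, Finset.card_filter]
    push_cast
    rw [Finset.mul_sum]
    refine Finset.sum_congr rfl fun b _ => ?_
    rw [quadraticChar_sq_add_self, quadraticChar_sq_add_self]
    by_cases h1 : b ∈ QRp q <;> by_cases h2 : b + w ∈ QRp q <;> simp [h1, h2]
  -- The substitution `b = -w x`, for which `b + w = w (1 - x)`.
  have hsub : ∑ b : ZMod q, (χ b ^ 2 + χ b) * (χ (b + w) ^ 2 + χ (b + w))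
      = ∑ x : ZMod q, ((1 : MulChar (ZMod q) ℤ) x + χ w * χ x) *
          ((1 : MulChar (ZMod q) ℤ) (1 - x) + χ w * χ (1 - x)) := by
    refine (Fintype.sum_equiv (Equiv.mulLeft₀ (-w) (neg_ne_zero.2 hw)) _ _ fun x => ?_).symm
    have e1 : χ (-w * x) = χ w * χ x := by
      rw [map_mul, ← neg_one_mul, map_mul, hneg, one_mul]
    have e2 : χ (-w * x + w) = χ w * χ (1 - x) := by
      rw [← map_mul]; congr 1; ring
    change _ = (χ (-w * x) ^ 2 + χ (-w * x)) * (χ (-w * x + w) ^ 2 + χ (-w * x + w))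
    rw [e1, e2, mul_pow, mul_pow, he, hone, hone, one_mul, one_mul]
  have hexp : ∑ x : ZMod q, ((1 : MulChar (ZMod q) ℤ) x + χ w * χ x) *
          ((1 : MulChar (ZMod q) ℤ) (1 - x) + χ w * χ (1 - x))
      = jacobiSum (1 : MulChar (ZMod q) ℤ) 1 + χ w * jacobiSum 1 χ + χ w * jacobiSum χ 1
        + χ w ^ 2 * jacobiSum χ χ := by
    simp only [jacobiSum, Finset.mul_sum, ← Finset.sum_add_distrib]
    exact Finset.sum_congr rfl fun x _ => by ring
  rw [hcount, hsub, hexp, h11, h1χ, hχ1, hχχ, he]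
  ring

lemma mem_QRset_iff {n : ℕ} {p : Fin n → ℕ} (hp : ∀ i, (p i).Prime) {N : ℕ}
    (e : ZMod N ≃+* ∀ i, ZMod (p i)) (u : ZMod N) :
    u ∈ QRset N ↔ ∀ i, e u i ∈ QRp (p i) := by
  have (i : Fin n) : Fact (p i).Prime := ⟨hp i⟩
  constructor
  · rintro ⟨x, hx, rfl⟩ i
    have hxi : e x i ≠ 0 := (Pi.isUnit_iff.1 (hx.map e) i).ne_zero
    simp only [map_pow, Pi.pow_apply]
    exact ⟨pow_ne_zero _ hxi, IsSquare.sq _⟩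
  · intro h
    choose h0 y hy using h
    refine ⟨e.symm y, ?_, ?_⟩
    · refine IsUnit.map e.symm (Pi.isUnit_iff.2 fun i => isUnit_iff_ne_zero.2 fun h => h0 i ?_)
      rw [hy i, h, mul_zero]
    · apply e.injective
      funext i
      simp [hy i, sq]

theorem stmt_12 (n : ℕ) (hn : 0 < n) (p : Fin n → ℕ) (hp : ∀ i, (p i).Prime)
    (h4 : ∀ i, p i % 4 = 1) (hmono : StrictMono p)
    (N : ℕ) (hN : N = ∏ i, p i) (z : ZMod N) (hz : IsUnit z)
    (T : Finset (Fin n)) (hT : T.Nonempty)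
    (hTmem : ∀ i ∈ T, (z.val : ZMod (p i)) ≠ 0 ∧ ¬ IsSquare (z.val : ZMod (p i)))
    (hTnot : ∀ i ∉ T, (z.val : ZMod (p i)) ∈ QRp (p i)) :
    {ab : ZMod N × ZMod N | ab.1 ∈ QRset N ∧ ab.2 ∈ QRset N ∧ ab.1 - ab.2 = z}.ncard
      = ((∏ i ∈ T, (p i - 1)) * ∏ i ∈ Tᶜ, (p i - 5)) / 4 ^ n := by
  have hfact (i : Fin n) : Fact (p i).Prime := ⟨hp i⟩
  have h5 : ∀ i, 5 ≤ p i := fun i => by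
    have := h4 i; have := (hp i).two_le; omega
  have hcop : Pairwise (Function.onFun Nat.Coprime p) := fun i j hij =>
    (Nat.coprime_primes (hp i) (hp j)).2 (hmono.injective.ne hij)
  subst hN
  have : NeZero (∏ i, p i) := ⟨Finset.prod_ne_zero_iff.2 fun i _ => (hp i).ne_zero⟩
  let e := ZMod.prodEquivPi p hcop
  have hez : ∀ i, e z i = (z.val : ZMod (p i)) := fun i => by
    conv_lhs => rw [← ZMod.natCast_zmod_val z]
    rw [map_natCast, Pi.natCast_apply]
  have hbij : {ab : ZMod (∏ i, p i) × ZMod (∏ i, p i) |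
        ab.1 ∈ QRset _ ∧ ab.2 ∈ QRset _ ∧ ab.1 - ab.2 = z}
      = (fun f : ∀ i, ZMod (p i) => (e.symm f + z, e.symm f)) ''
          (Set.univ.pi fun i => localSet (p i) (z.val : ZMod (p i))) := by
    ext ⟨a, b⟩
    simp only [Set.mem_setOf_eq, Set.mem_image, Set.mem_univ_pi, Prod.mk.injEq,
      mem_QRset_iff hp e, localSet]
    constructor
    · rintro ⟨ha, hb, hab⟩
      have hab' : a = b + z := by rw [← hab]; ring
      refine ⟨e b, fun i => ⟨hb i, ?_⟩, by simp [hab'], by simp⟩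
      rw [← hez i]
      simpa [hab'] using ha i
    · rintro ⟨f, hf, rfl, rfl⟩
      refine ⟨fun i => ?_, fun i => by simpa using (hf i).1, by ring⟩
      rw [map_add, Pi.add_apply, hez i]
      simpa using (hf i).2
  have hinj : Function.Injective
      (fun f : ∀ i, ZMod (p i) => (e.symm f + z, e.symm f)) := fun f g hfg =>
    e.symm.injective (Prod.ext_iff.1 hfg).2
  have hpi : (Set.univ.pi fun i => localSet (p i) (z.val : ZMod (p i))).ncard
      = ∏ i, (localSet (p i) (z.val : ZMod (p i))).ncard := by
    simp only [← Nat.card_coe_set_eq]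
    rw [Nat.card_congr (Equiv.Set.univPi _), Nat.card_pi]
  rw [hbij, Set.ncard_image_of_injective _ hinj, hpi]
  have hloc1 : ∀ i ∈ T, 4 * (localSet (p i) (z.val : ZMod (p i))).ncard = p i - 1 := by
    intro i hi
    have h := card_local (h4 i) _ (hTmem i hi).1
    rw [quadraticChar_neg_one_iff_not_isSquare.2 (hTmem i hi).2] at h
    have := h5 i
    omega
  have hloc2 : ∀ i ∈ Tᶜ, 4 * (localSet (p i) (z.val : ZMod (p i))).ncard = p i - 5 := by
    intro i hi
    obtain ⟨h0, hs⟩ := hTnot i (Finset.mem_compl.1 hi)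
    have h := card_local (h4 i) _ h0
    rw [(quadraticChar_one_iff_isSquare h0).2 hs] at h
    have := h5 i
    omega
  rw [← Finset.prod_congr rfl hloc1, ← Finset.prod_congr rfl hloc2, Finset.prod_mul_prod_compl,
    Finset.prod_mul_distrib, Finset.prod_const, Finset.card_univ, Fintype.card_fin,
    Nat.mul_div_cancel_left _ (by positivity)]
end

section
/- Let p_1 < p_2 < ... < p_n be distinct Pythagorean primes and N = p_1 p_2 ⋯ p_n. Then the adjacency matrix of the Paley-type graph Γ_N has exactly 3ⁿ distinct real eigenvalues. -/
open scoped Classical in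
/-- The adjacency matrix of the Paley-type graph, as a real matrix. -/
noncomputable def paleyAdjMatrix (M : ℕ) : Matrix (ZMod M) (ZMod M) ℝ :=
  fun a b => if (paleyType M).Adj a b then 1 else 0

/-! ### Square roots of primes and products of Paley eigenvalues -/

/-- The subfield `K(s) = {a + b s | a, b ∈ K}` of `ℝ`, for `s² ∈ K`. The case `s ∈ K`, where this
is just `K`, is allowed. -/
def quadExt (K : Subfield ℝ) (s : ℝ) (hs : s ^ 2 ∈ K) : Subfield ℝ where
  carrier := {x | ∃ a ∈ K, ∃ b ∈ K, x = a + b * s}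
  mul_mem' := by
    rintro _ _ ⟨a, ha, b, hb, rfl⟩ ⟨c, hc, d, hd, rfl⟩
    exact ⟨a * c + b * d * s ^ 2, K.add_mem (K.mul_mem ha hc) (K.mul_mem (K.mul_mem hb hd) hs),
      a * d + b * c, K.add_mem (K.mul_mem ha hd) (K.mul_mem hb hc), by ring⟩
  one_mem' := ⟨1, K.one_mem, 0, K.zero_mem, by ring⟩
  add_mem' := by
    rintro _ _ ⟨a, ha, b, hb, rfl⟩ ⟨c, hc, d, hd, rfl⟩
    exact ⟨a + c, K.add_mem ha hc, b + d, K.add_mem hb hd, by ring⟩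
  zero_mem' := ⟨0, K.zero_mem, 0, K.zero_mem, by ring⟩
  neg_mem' := by
    rintro _ ⟨a, ha, b, hb, rfl⟩
    exact ⟨-a, K.neg_mem ha, -b, K.neg_mem hb, by ring⟩
  inv_mem' := by
    rintro _ ⟨a, ha, b, hb, rfl⟩
    by_cases h : a - b * s = 0
    · -- here `b * s = a` already lies in `K`, so no conjugate is needed
      refine ⟨(a + b * s)⁻¹, K.inv_mem (K.add_mem ha ?_), 0, K.zero_mem, by ring⟩
      rwa [← sub_eq_zero.mp h]
    · have hden : a ^ 2 - b ^ 2 * s ^ 2 ∈ K :=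
        K.sub_mem (K.pow_mem ha 2) (K.mul_mem (K.pow_mem hb 2) hs)
      refine ⟨a / (a ^ 2 - b ^ 2 * s ^ 2), K.div_mem ha hden,
        -b / (a ^ 2 - b ^ 2 * s ^ 2), K.div_mem (K.neg_mem hb) hden, ?_⟩
      by_cases h' : a + b * s = 0
      · have : a ^ 2 - b ^ 2 * s ^ 2 = 0 := by linear_combination (a - b * s) * h'
        simp [this, h']
      · have : a ^ 2 - b ^ 2 * s ^ 2 ≠ 0 := by
          have := mul_ne_zero h h'
          intro h0; apply this; linear_combination h0
        field_simp
        ring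

/-- The field is `ℚ(√q : q ∈ S)`, built one square root at a time. In the step from `K` to `K(√q)`,
squaring `√d = a + b √q` shows that either `ab = 0`, so that `√d` or `√(dq)` is in `K`, or `√q` was
already in `K`. -/
theorem exists_subfield_sqrt (S : Finset ℕ) : ∃ K : Subfield ℝ,
    (∀ q ∈ S, √(q : ℝ) ∈ K) ∧
    ∀ d : ℕ, √(d : ℝ) ∈ K → ∃ T ⊆ S, IsSquare (d * ∏ q ∈ T, q) := by
  induction S using Finset.induction_on with
  | empty =>
    refine ⟨(algebraMap ℚ ℝ).fieldRange, by simp, fun d hd => ⟨∅, le_rfl, ?_⟩⟩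
    by_contra h
    rw [Finset.prod_empty, mul_one] at h
    exact irrational_sqrt_natCast_iff.mpr h (by simpa using hd)
  | insert q S hq ih =>
    obtain ⟨K, hK, hd⟩ := ih
    have hsq : √(q : ℝ) ^ 2 = q := Real.sq_sqrt (Nat.cast_nonneg q)
    have hqK : √(q : ℝ) ^ 2 ∈ K := by rw [hsq]; exact natCast_mem K q
    by_cases hmem : √(q : ℝ) ∈ K
    · refine ⟨K, ?_, fun d h => ?_⟩
      · intro r hr
        rcases Finset.mem_insert.mp hr with rfl | hr
        exacts [hmem, hK r hr]
      · obtain ⟨T, hT, h⟩ := hd d h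
        exact ⟨T, hT.trans (Finset.subset_insert q S), h⟩
    · refine ⟨quadExt K _ hqK, ?_, ?_⟩
      · intro r hr
        rcases Finset.mem_insert.mp hr with rfl | hr
        · exact ⟨0, K.zero_mem, 1, K.one_mem, by ring⟩
        · exact ⟨_, hK r hr, 0, K.zero_mem, by ring⟩
      · rintro d ⟨a, ha, b, hb, hab⟩
        have hdsq : √(d : ℝ) ^ 2 = d := Real.sq_sqrt (Nat.cast_nonneg d)
        have hexp : (d : ℝ) = a ^ 2 + b ^ 2 * q + 2 * a * b * √q := by
          rw [← hdsq, hab, ← hsq]; simp only [Real.sqrt_sq (Real.sqrt_nonneg _)]; ring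
        by_cases h0 : a * b = 0
        · rcases mul_eq_zero.mp h0 with rfl | rfl
          · have : √((d * q : ℕ) : ℝ) ∈ K := by
              rw [Nat.cast_mul, Real.sqrt_mul (Nat.cast_nonneg d), hab, zero_add, mul_assoc, ← sq]
              exact K.mul_mem hb hqK
            obtain ⟨T, hT, h⟩ := hd _ this
            refine ⟨insert q T, Finset.insert_subset_insert q hT, ?_⟩
            rw [Finset.prod_insert (fun h => hq (hT h)), ← mul_assoc]
            exact h
          · obtain ⟨T, hT, h⟩ := hd d (by rw [hab, zero_mul, add_zero]; exact ha)
            exact ⟨T, hT.trans (Finset.subset_insert q S), h⟩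
        · refine absurd ?_ hmem
          have : √(q : ℝ) = (d - a ^ 2 - b ^ 2 * q) / (2 * (a * b)) := by
            rw [eq_div_iff (mul_ne_zero two_ne_zero h0), hexp]; ring
          rw [this]
          have h2 : (2 : ℝ) ∈ K := ofNat_mem K 2
          exact K.div_mem (K.sub_mem (K.sub_mem (natCast_mem K d) (K.pow_mem ha 2))
            (K.mul_mem (K.pow_mem hb 2) (natCast_mem K q))) (K.mul_mem h2 (K.mul_mem ha hb))

theorem exists_subfield_sqrt_prime {S : Finset ℕ} (hS : ∀ q ∈ S, q.Prime) {r : ℕ} (hr : r.Prime)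
    (hrS : r ∉ S) : ∃ K : Subfield ℝ, (∀ q ∈ S, √(q : ℝ) ∈ K) ∧ √(r : ℝ) ∉ K := by
  obtain ⟨K, hK, h⟩ := exists_subfield_sqrt S
  refine ⟨K, hK, fun hmem => ?_⟩
  obtain ⟨T, hT, m, hm⟩ := h r hmem
  have hrm : r ∣ m := by
    have : r ∣ m * m := ⟨_, hm.symm⟩
    exact (hr.dvd_mul.mp this).elim id id
  obtain ⟨k, rfl⟩ := hrm
  have : r ∣ ∏ q ∈ T, q := by
    refine ⟨k * k, Nat.eq_of_mul_eq_mul_left hr.pos ?_⟩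
    rw [hm]; ring
  obtain ⟨q, hq, hrq⟩ := (hr.prime.dvd_finsetProd_iff _).mp this
  rw [(Nat.prime_dvd_prime_iff_eq hr (hS q (hT hq))).mp hrq] at hrS
  exact hrS (hT hq)

/-- The three eigenvalues `(q - 1) / 2`, `(-1 + √q) / 2`, `(-1 - √q) / 2` of the Paley graph on
`ZMod q`, for a prime `q ≡ 1 (mod 4)`. -/
noncomputable def paleyEig (q : ℕ) : Fin 3 → ℝ :=
  ![((q : ℝ) - 1) / 2, (-1 + √q) / 2, (-1 - √q) / 2]

theorem paleyEig_mem {K : Subfield ℝ} {q : ℕ} (h : √(q : ℝ) ∈ K) (k : Fin 3) :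
    paleyEig q k ∈ K := by
  have h2 : (2 : ℝ) ∈ K := ofNat_mem K 2
  have h1 : (1 : ℝ) ∈ K := K.one_mem
  have hq : (q : ℝ) ∈ K := natCast_mem K q
  fin_cases k
  · exact K.div_mem (K.sub_mem hq h1) h2
  · exact K.div_mem (K.add_mem (K.neg_mem h1) h) h2
  · exact K.div_mem (K.sub_mem (K.neg_mem h1) h) h2

/-- The ratio of two distinct Paley eigenvalues never lies in a field that misses `√q`: writing
`2 * paleyEig q k = a k + b k √q`, the vectors `(a k, b k)` are pairwise non-proportional, while
`1, √q` are independent over `K`. -/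
theorem paleyEig_eq {K : Subfield ℝ} {q : ℕ} (h : √(q : ℝ) ∉ K) {A B : ℝ}
    (hA : A ∈ K) (hB : B ∈ K) (hA0 : A ≠ 0) (hB0 : B ≠ 0) {k l : Fin 3}
    (he : A * paleyEig q k = B * paleyEig q l) : k = l := by
  have key : ∀ x ∈ K, ∀ y ∈ K, x + y * √(q : ℝ) = 0 → x = 0 ∧ y = 0 := by
    intro x hx y hy hxy
    by_cases hy0 : y = 0
    · subst hy0; simpa using hxy
    · refine absurd ?_ h
      have : √(q : ℝ) = -x / y := by field_simp; linear_combination hxy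
      rw [this]
      exact K.div_mem (K.neg_mem hx) hy
  have hqK : (q : ℝ) - 1 ∈ K := K.sub_mem (natCast_mem K q) K.one_mem
  let a : Fin 3 → ℝ := ![(q : ℝ) - 1, -1, -1]
  let b : Fin 3 → ℝ := ![0, 1, -1]
  have ha : ∀ k, a k ∈ K := by
    intro k
    fin_cases k
    exacts [hqK, K.neg_mem K.one_mem, K.neg_mem K.one_mem]
  have hb : ∀ k, b k ∈ K := by
    intro k
    fin_cases k
    exacts [K.zero_mem, K.one_mem, K.neg_mem K.one_mem]
  have hab : ∀ k, paleyEig q k = (a k + b k * √q) / 2 := by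
    intro k
    fin_cases k <;> (simp [paleyEig, a, b]; try ring)
  obtain ⟨h1, h2⟩ := key (A * a k - B * a l)
    (K.sub_mem (K.mul_mem hA (ha k)) (K.mul_mem hB (ha l))) (A * b k - B * b l)
    (K.sub_mem (K.mul_mem hA (hb k)) (K.mul_mem hB (hb l))) (by
      rw [hab, hab] at he; linear_combination 2 * he)
  fin_cases k <;> fin_cases l <;> simp [a, b, hA0, hB0] at h1 h2 ⊢
  all_goals exact hA0 (by linarith)

theorem paleyEig_ne_zero {q : ℕ} (hq : 1 < q) (k : Fin 3) : paleyEig q k ≠ 0 := by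
  have hq' : (1 : ℝ) < q := by exact_mod_cast hq
  have hs : 1 < √(q : ℝ) := by rw [Real.lt_sqrt zero_le_one]; simpa using hq
  have h0 : paleyEig q 0 = ((q : ℝ) - 1) / 2 := rfl
  have h1 : paleyEig q 1 = (-1 + √(q : ℝ)) / 2 := rfl
  have h2 : paleyEig q 2 = (-1 - √(q : ℝ)) / 2 := rfl
  fin_cases k <;> simp only [Fin.zero_eta, Fin.mk_one, Fin.reduceFinMk, h0, h1, h2] <;> intro h <;>
    linarith

/-- The choice at the index `j` is recovered from the product by working over a field that contains
`√(p i)` for all `i ≠ j` but not `√(p j)`. -/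
theorem prod_paleyEig_injective {ι : Type*} [Fintype ι] (p : ι → ℕ)
    (hp : ∀ i, (p i).Prime) (hinj : Function.Injective p) :
    Function.Injective (fun f : ι → Fin 3 => ∏ i, paleyEig (p i) (f i)) := by
  classical
  intro f g hfg
  funext j
  obtain ⟨K, hK, hj⟩ := exists_subfield_sqrt_prime (S := (Finset.univ.erase j).image p) (r := p j)
    (by simp only [Finset.mem_image]; rintro _ ⟨i, -, rfl⟩; exact hp i) (hp j)
    (by
      simp only [Finset.mem_image]
      rintro ⟨i, hi, hij⟩
      exact Finset.ne_of_mem_erase hi (hinj hij))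
  have hmem : ∀ f : ι → Fin 3, ∏ i ∈ Finset.univ.erase j, paleyEig (p i) (f i) ∈ K := fun f =>
    prod_mem fun i hi => paleyEig_mem (hK _ (Finset.mem_image_of_mem p hi)) _
  have hne : ∀ f : ι → Fin 3, ∏ i ∈ Finset.univ.erase j, paleyEig (p i) (f i) ≠ 0 := fun f =>
    Finset.prod_ne_zero_iff.mpr fun i _ => paleyEig_ne_zero (hp i).one_lt _
  refine paleyEig_eq hj (hmem f) (hmem g) (hne f) (hne g) ?_
  rw [Finset.prod_erase_mul _ _ (Finset.mem_univ j), Finset.prod_erase_mul _ _ (Finset.mem_univ j)]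
  exact hfg

/-! ### Kronecker products of symmetric matrices -/

/-- The Kronecker product of a finite family of square real matrices, indexed by the product of
their index types. -/
def piKronecker {ι : Type*} [Fintype ι] {κ : ι → Type*} (A : ∀ i, Matrix (κ i) (κ i) ℝ) :
    Matrix (∀ i, κ i) (∀ i, κ i) ℝ :=
  Matrix.of fun a b => ∏ i, A i (a i) (b i)

section piKronecker

variable {ι : Type*} [Fintype ι] {κ : ι → Type*}

theorem piKronecker_mul [DecidableEq ι] [∀ i, Fintype (κ i)] (A B : ∀ i, Matrix (κ i) (κ i) ℝ) :
    piKronecker A * piKronecker B = piKronecker fun i => A i * B i := by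
  ext a b
  simp only [piKronecker, Matrix.mul_apply, Matrix.of_apply, Fintype.prod_sum,
    Finset.prod_mul_distrib]

theorem piKronecker_diagonal [∀ i, DecidableEq (κ i)] (d : ∀ i, κ i → ℝ) :
    (piKronecker fun i => Matrix.diagonal (d i)) = Matrix.diagonal fun a => ∏ i, d i (a i) := by
  ext a b
  by_cases h : a = b
  · subst h; simp [piKronecker]
  · obtain ⟨i, hi⟩ := Function.ne_iff.mp h
    rw [Matrix.diagonal_apply_ne _ h]
    exact Finset.prod_eq_zero (Finset.mem_univ i) (Matrix.diagonal_apply_ne _ hi)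

theorem piKronecker_one [∀ i, DecidableEq (κ i)] :
    (piKronecker fun i => (1 : Matrix (κ i) (κ i) ℝ)) = 1 := by
  have := piKronecker_diagonal (fun (i : ι) (_ : κ i) => (1 : ℝ))
  simpa using this

/-- Orthogonal diagonalizations `A i = U i * D i * (U i)ᵀ` multiply to a diagonalization of the
Kronecker product, whose diagonal consists of the products of eigenvalues. -/
theorem spectrum_piKronecker [DecidableEq ι] [∀ i, Fintype (κ i)] [∀ i, DecidableEq (κ i)]
    (A : ∀ i, Matrix (κ i) (κ i) ℝ) (hA : ∀ i, (A i).IsHermitian)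
    {τ : Type*} (e : ι → τ → ℝ) (he : ∀ i, spectrum ℝ (A i) = Set.range (e i)) :
    spectrum ℝ (piKronecker A) = Set.range fun f : ι → τ => ∏ i, e i (f i) := by
  let U : ∀ i, Matrix (κ i) (κ i) ℝ := fun i => (hA i).eigenvectorUnitary
  have hU1 : ∀ i, U i * star (U i) = 1 := fun i => Unitary.coe_mul_star_self _
  have hU2 : ∀ i, star (U i) * U i = 1 := fun i => Unitary.coe_star_mul_self _
  have hspec : ∀ i, A i = U i * Matrix.diagonal (hA i).eigenvalues * star (U i) := by
    intro i
    have := (hA i).spectral_theorem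
    rw [Unitary.conjStarAlgAut_apply] at this
    exact this
  let V : (Matrix (∀ i, κ i) (∀ i, κ i) ℝ)ˣ :=
    { val := piKronecker U
      inv := piKronecker fun i => star (U i)
      val_inv := by rw [piKronecker_mul]; simp only [hU1, piKronecker_one]
      inv_val := by rw [piKronecker_mul]; simp only [hU2, piKronecker_one] }
  have hfac : piKronecker A =
      (V : Matrix (∀ i, κ i) (∀ i, κ i) ℝ) *
        Matrix.diagonal (fun a : ∀ i, κ i => ∏ i, (hA i).eigenvalues (a i)) *
        ((V⁻¹ : (Matrix (∀ i, κ i) (∀ i, κ i) ℝ)ˣ) : Matrix (∀ i, κ i) (∀ i, κ i) ℝ) := by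
    change _ = piKronecker U * _ * piKronecker fun i => star (U i)
    rw [← piKronecker_diagonal, piKronecker_mul, piKronecker_mul]
    exact congrArg piKronecker (funext hspec)
  rw [hfac, spectrum.units_conjugate, spectrum_diagonal]
  have hr : ∀ i, Set.range (hA i).eigenvalues = Set.range (e i) := fun i => by
    rw [← he i, (hA i).spectrum_real_eq_range_eigenvalues]
  ext x
  constructor
  · rintro ⟨a, rfl⟩
    have : ∀ i, ∃ t, e i t = (hA i).eigenvalues (a i) := fun i => by
      have : (hA i).eigenvalues (a i) ∈ Set.range (e i) := hr i ▸ Set.mem_range_self _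
      exact this
    choose f hf using this
    exact ⟨f, by simp only [hf]⟩
  · rintro ⟨f, rfl⟩
    have : ∀ i, ∃ t, (hA i).eigenvalues t = e i (f i) := fun i => by
      have : e i (f i) ∈ Set.range (hA i).eigenvalues := hr i ▸ Set.mem_range_self _
      exact this
    choose a ha using this
    exact ⟨a, by simp only [ha]⟩

end piKronecker

/-! ### Adjacency in the Paley-type graph -/

theorem mem_QRset_prime {q : ℕ} [Fact q.Prime] {z : ZMod q} :
    z ∈ QRset q ↔ z ≠ 0 ∧ IsSquare z := by
  constructor
  · rintro ⟨x, hx, rfl⟩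
    exact ⟨pow_ne_zero 2 hx.ne_zero, IsSquare.sq x⟩
  · rintro ⟨h0, x, rfl⟩
    exact ⟨x, isUnit_iff_ne_zero.mpr (left_ne_zero_of_mul h0), sq x⟩

theorem neg_mem_QRset_prime {q : ℕ} [Fact q.Prime] (h4 : q % 4 = 1) {z : ZMod q}
    (hz : z ∈ QRset q) : -z ∈ QRset q := by
  rw [mem_QRset_prime] at hz ⊢
  have : IsSquare (-1 : ZMod q) := ZMod.exists_sq_eq_neg_one_iff.mpr (by omega)
  exact ⟨neg_ne_zero.mpr hz.1, by simpa using this.mul hz.2⟩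

theorem paleyType_adj_iff {M : ℕ} (hneg : ∀ z ∈ QRset M, -z ∈ QRset M) (h0 : 0 ∉ QRset M)
    (a b : ZMod M) : (paleyType M).Adj a b ↔ a - b ∈ QRset M := by
  rw [paleyType, SimpleGraph.fromRel_adj]
  constructor
  · rintro ⟨-, h | h⟩
    · exact h
    · simpa using hneg _ h
  · refine fun h => ⟨?_, Or.inl h⟩
    rintro rfl
    exact h0 (by simpa using h)

theorem paleyType_adj_prime {q : ℕ} [Fact q.Prime] (h4 : q % 4 = 1) (a b : ZMod q) :
    (paleyType q).Adj a b ↔ a - b ∈ QRset q :=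
  paleyType_adj_iff (fun _ => neg_mem_QRset_prime h4) (fun h => (mem_QRset_prime.mp h).1 rfl) a b

theorem paleyAdjMatrix_isHermitian (M : ℕ) : (paleyAdjMatrix M).IsHermitian := by
  ext a b
  simp only [Matrix.conjTranspose_apply, paleyAdjMatrix, star_trivial]
  congr 1
  exact propext ((paleyType M).adj_comm b a)

/-- Being a square of a unit can be checked in each factor of a product decomposition. -/
theorem mem_QRset_pi {ι : Type*} [Fintype ι] (p : ι → ℕ) (M : ℕ)
    (φ : ZMod M ≃+* ∀ i, ZMod (p i)) (z : ZMod M) :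
    z ∈ QRset M ↔ ∀ i, φ z i ∈ QRset (p i) := by
  constructor
  · rintro ⟨x, hx, rfl⟩ i
    exact ⟨φ x i, (Pi.isUnit_iff.mp (hx.map φ)) i, by simp⟩
  · intro h
    choose x hx hxz using h
    refine ⟨φ.symm x, (Pi.isUnit_iff.mpr hx).map φ.symm, ?_⟩
    rw [← map_pow, RingEquiv.symm_apply_eq]
    exact funext hxz

/-! ### The spectrum for a prime modulus -/

theorem mem_spectrum_matrix {n : Type*} [Fintype n] [DecidableEq n] (A : Matrix n n ℝ) (μ : ℝ) :
    μ ∈ spectrum ℝ A ↔ ∃ v : n → ℝ, v ≠ 0 ∧ A.mulVec v = μ • v := by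
  rw [spectrum.mem_iff, Matrix.isUnit_iff_isUnit_det, isUnit_iff_ne_zero, not_not,
    ← Matrix.exists_mulVec_eq_zero_iff]
  refine exists_congr fun v => and_congr_right fun _ => ?_
  rw [Matrix.sub_mulVec, sub_eq_zero, Algebra.algebraMap_eq_smul_one, Matrix.smul_mulVec,
    Matrix.one_mulVec, eq_comm]

section prime

variable {q : ℕ} [Fact q.Prime]

/-- The quadratic character of `ZMod q`, with real values. -/
noncomputable def chiR (q : ℕ) [Fact q.Prime] (z : ZMod q) : ℝ := (quadraticChar (ZMod q) z : ℤ)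

/-- The matrix on the right is `J + S`, with `J` the all-ones matrix and `S` the Jacobsthal matrix
`χ(a - b)`. -/
theorem two_mul_paleyAdjMatrix (h4 : q % 4 = 1) :
    (2 : ℝ) • paleyAdjMatrix q + 1 = Matrix.of fun a b => 1 + chiR q (a - b) := by
  ext a b
  by_cases h : a = b
  · subst h
    simp [paleyAdjMatrix, chiR]
  · have h' : a - b ≠ 0 := sub_ne_zero.mpr h
    have : (paleyType q).Adj a b ↔ IsSquare (a - b) := by
      rw [paleyType_adj_prime h4, mem_QRset_prime, and_iff_right h']
    simp only [paleyAdjMatrix, chiR, Matrix.add_apply, Matrix.smul_apply, Matrix.one_apply_ne h,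
      Matrix.of_apply, this, quadraticChar_apply, quadraticCharFun, if_neg h']
    split_ifs <;> norm_num

theorem ringChar_ne_two (h4 : q % 4 = 1) : ringChar (ZMod q) ≠ 2 := by
  rw [ZMod.ringChar_zmod_n]; rintro rfl; omega

theorem sum_chiR (h4 : q % 4 = 1) : ∑ z, chiR q z = 0 := by
  unfold chiR
  exact_mod_cast quadraticChar_sum_zero (ringChar_ne_two h4)

/-- The entries of `S²`, for the Jacobsthal matrix `S` with entries `χ(a - b)`: `S² = q I - J`. -/
theorem sum_chiR_mul_chiR (h4 : q % 4 = 1) (a b : ZMod q) :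
    ∑ c, chiR q (a - c) * chiR q (c - b) = if a = b then (q : ℝ) - 1 else -1 := by
  set χ := quadraticChar (ZMod q) with hχ
  have hq2 := ringChar_ne_two h4
  have hneg : χ (-1) = 1 := by
    rw [hχ, quadraticChar_one_iff_isSquare (by simp)]
    exact ZMod.exists_sq_eq_neg_one_iff.mpr (by omega)
  suffices h : ∑ c, χ (a - c) * χ (c - b) = if a = b then (q : ℤ) - 1 else -1 by
    have := congrArg (Int.cast : ℤ → ℝ) h
    unfold chiR
    push_cast at this
    exact this
  split_ifs with hab
  · subst hab
    have h1 : ∀ c, χ (a - c) * χ (c - a) = if c = a then 0 else 1 := by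
      intro c
      split_ifs with hc
      · simp [hc, hχ]
      · rw [← neg_sub c a, neg_eq_neg_one_mul, map_mul, hneg, one_mul, ← sq]
        exact quadraticChar_sq_one (sub_ne_zero.mpr hc)
    simp only [h1]
    rw [Finset.sum_ite, Finset.sum_const_zero, zero_add, Finset.sum_const, Finset.filter_ne',
      Finset.card_erase_of_mem (Finset.mem_univ a), Finset.card_univ, ZMod.card, nsmul_one,
      Nat.cast_pred (Fact.out : q.Prime).pos]
  · have h0 : a - b ≠ 0 := sub_ne_zero.mpr hab
    -- `c = b + (a - b) x` turns the sum into the Jacobi sum of `χ` with itself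
    rw [← ((Equiv.mulLeft₀ (a - b) h0).trans (Equiv.addLeft b)).sum_comp]
    have hJ : jacobiSum χ χ = -1 := by
      have := jacobiSum_nontrivial_inv (quadraticChar_ne_one hq2)
      rwa [(quadraticChar_isQuadratic (ZMod q)).inv, hneg] at this
    rw [← hJ, jacobiSum]
    refine Finset.sum_congr rfl fun x _ => ?_
    have e1 : a - (b + (a - b) * x) = (a - b) * (1 - x) := by ring
    have e2 : b + (a - b) * x - b = (a - b) * x := by ring
    have e3 : χ (a - b) ^ 2 = 1 := quadraticChar_sq_one h0
    simp only [Equiv.trans_apply, Equiv.mulLeft₀_apply, Equiv.coe_addLeft, e1, e2, map_mul]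
    linear_combination (χ x * χ (1 - x)) * e3

/-- `(J + S)² = q I + (q - 1) J`, since `S J = J S = 0`. -/
theorem onesAddJacobsthal_mulVec_mulVec (h4 : q % 4 = 1) (v : ZMod q → ℝ) :
    (Matrix.of fun a b => 1 + chiR q (a - b)).mulVec
      ((Matrix.of fun a b => 1 + chiR q (a - b)).mulVec v) =
    fun a => (q : ℝ) * v a + ((q : ℝ) - 1) * ∑ b, v b := by
  have hs1 : ∀ a, ∑ c, chiR q (a - c) = 0 := fun a => by
    rw [← sum_chiR h4, ← (Equiv.subLeft a).sum_comp (chiR q)]; rfl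
  have hs2 : ∀ b, ∑ c, chiR q (c - b) = 0 := fun b => by
    rw [← sum_chiR h4, ← (Equiv.subRight b).sum_comp (chiR q)]; rfl
  have hsq : (Matrix.of fun a b => 1 + chiR q (a - b)) * (Matrix.of fun a b => 1 + chiR q (a - b)) =
      Matrix.of fun a b : ZMod q => (if a = b then (q : ℝ) else 0) + ((q : ℝ) - 1) := by
    ext a b
    simp only [Matrix.mul_apply, Matrix.of_apply]
    have : ∀ c, (1 + chiR q (a - c)) * (1 + chiR q (c - b)) =
        1 + chiR q (a - c) + chiR q (c - b) + chiR q (a - c) * chiR q (c - b) := fun c => by ring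
    simp only [this, Finset.sum_add_distrib, hs1, hs2, sum_chiR_mul_chiR h4]
    simp only [Finset.sum_const, Finset.card_univ, ZMod.card, nsmul_one]
    split_ifs <;> ring
  rw [Matrix.mulVec_mulVec, hsq]
  ext a
  simp [Matrix.mulVec, dotProduct, add_mul, Finset.sum_add_distrib, Finset.mul_sum]

/-- `J (J + S) = q J`. -/
theorem sum_onesAddJacobsthal_mulVec (h4 : q % 4 = 1) (v : ZMod q → ℝ) :
    ∑ a, (Matrix.of fun a b => 1 + chiR q (a - b)).mulVec v a = q * ∑ b, v b := by
  have hs2 : ∀ b, ∑ c, chiR q (c - b) = 0 := fun b => by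
    rw [← sum_chiR h4, ← (Equiv.subRight b).sum_comp (chiR q)]; rfl
  simp only [Matrix.mulVec, dotProduct, Matrix.of_apply]
  rw [Finset.sum_comm, Finset.mul_sum]
  refine Finset.sum_congr rfl fun b _ => ?_
  rw [← Finset.sum_mul, Finset.sum_add_distrib, hs2]
  simp

theorem spectrum_paleyAdjMatrix_prime (h4 : q % 4 = 1) :
    spectrum ℝ (paleyAdjMatrix q) = Set.range (paleyEig q) := by
  set B : Matrix (ZMod q) (ZMod q) ℝ := Matrix.of fun a b => 1 + chiR q (a - b) with hB
  have hq1 : (1 : ℝ) < q := by exact_mod_cast (Fact.out : q.Prime).one_lt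
  have hsq : √(q : ℝ) ^ 2 = q := Real.sq_sqrt (Nat.cast_nonneg q)
  have hBB : ∀ v, B.mulVec (B.mulVec v) = fun a => (q : ℝ) * v a + ((q : ℝ) - 1) * ∑ b, v b :=
    onesAddJacobsthal_mulVec_mulVec h4
  have hmv : ∀ v, B.mulVec v = (2 : ℝ) • (paleyAdjMatrix q).mulVec v + v := fun v => by
    rw [hB, ← two_mul_paleyAdjMatrix h4, Matrix.add_mulVec, Matrix.smul_mulVec, Matrix.one_mulVec]
  have hiff : ∀ (μ : ℝ) v, (paleyAdjMatrix q).mulVec v = μ • v ↔ B.mulVec v = (2 * μ + 1) • v := by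
    intro μ v
    rw [hmv, add_smul, one_smul, mul_smul, add_left_inj]
    exact (smul_right_injective _ (two_ne_zero' ℝ)).eq_iff.symm
  have h0 : paleyEig q 0 = ((q : ℝ) - 1) / 2 := rfl
  have h1 : paleyEig q 1 = (-1 + √(q : ℝ)) / 2 := rfl
  have h2 : paleyEig q 2 = (-1 - √(q : ℝ)) / 2 := rfl
  -- On vectors `w` with coordinate sum zero `B² w = q w`, so `B w + s w` is an eigenvector for `s`
  -- as soon as it is nonzero.
  have hroot : ∀ s : ℝ, s ^ 2 = q → ∃ v, v ≠ 0 ∧ B.mulVec v = s • v := by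
    intro s hs
    let w : ZMod q → ℝ := Pi.single 0 1 - Pi.single 1 1
    have hw : ∑ b, w b = 0 := by simp [w, Finset.sum_sub_distrib]
    refine ⟨B.mulVec w + s • w, fun h => ?_, ?_⟩
    · have := congrFun h 0
      have h01 : B.mulVec w 0 = -1 := by
        have hχ : chiR q (-1) = 1 := by
          unfold chiR
          rw [(quadraticChar_one_iff_isSquare (by simp)).mpr
            (ZMod.exists_sq_eq_neg_one_iff.mpr (by omega))]
          simp
        have hχ0 : chiR q 0 = 0 := by simp [chiR]
        simp [w, hB, Matrix.mulVec_sub, hχ, hχ0]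
      have hw0 : w 0 = 1 := by simp [w]
      simp only [Pi.add_apply, Pi.smul_apply, h01, hw0, smul_eq_mul, Pi.zero_apply] at this
      have : s = 1 := by linarith
      rw [this] at hs
      linarith
    · rw [Matrix.mulVec_add, Matrix.mulVec_smul, hBB, hw]
      ext a
      simp only [Pi.add_apply, Pi.smul_apply, smul_eq_mul]
      rw [← hs]; ring
  ext μ
  rw [mem_spectrum_matrix]
  simp only [hiff]
  constructor
  · rintro ⟨v, hv, hBv⟩
    have hsum : (2 * μ + 1) * ∑ b, v b = q * ∑ b, v b := by
      rw [← sum_onesAddJacobsthal_mulVec h4 v, ← hB, hBv, Finset.mul_sum]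
      rfl
    by_cases hv0 : ∑ b, v b = 0
    · obtain ⟨a, ha⟩ := Function.ne_iff.mp hv
      have := congrFun (hBB v) a
      rw [hBv, Matrix.mulVec_smul, hBv, hv0] at this
      simp only [Pi.smul_apply, smul_eq_mul, mul_zero, add_zero] at this
      have h3 : (2 * μ + 1) ^ 2 = √(q : ℝ) ^ 2 := by
        rw [hsq]
        exact mul_right_cancel₀ ha (by linear_combination this)
      rcases sq_eq_sq_iff_eq_or_eq_neg.mp h3 with h | h
      · exact ⟨1, by rw [h1]; linarith⟩
      · exact ⟨2, by rw [h2]; linarith⟩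
    · exact ⟨0, by rw [h0]; linarith [mul_right_cancel₀ hv0 hsum]⟩
  · rintro ⟨k, rfl⟩
    fin_cases k
    · refine ⟨fun _ => 1, fun h => one_ne_zero (congrFun h 0), ?_⟩
      have hs1 : ∀ a, ∑ c, chiR q (a - c) = 0 := fun a => by
        rw [← sum_chiR h4, ← (Equiv.subLeft a).sum_comp (chiR q)]; rfl
      ext a
      simp [h0, hB, Matrix.mulVec, dotProduct, Finset.sum_add_distrib, hs1]
      ring
    · have := hroot (√q) hsq
      convert this using 5
      simp [h1]; ring
    · have := hroot (-√q) (by rw [neg_sq, hsq])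
      convert this using 5
      simp [h2]; ring

end prime

/-! ### Assembling the factors -/

theorem stmt_15 (n : ℕ) (hn : 0 < n) (p : Fin n → ℕ) (hp : ∀ i, (p i).Prime)
    (h4 : ∀ i, p i % 4 = 1) (hmono : StrictMono p)
    (N : ℕ) [NeZero N] (hN : N = ∏ i, p i) :
    (spectrum ℝ (paleyAdjMatrix N)).ncard = 3 ^ n := by
  have : ∀ i, Fact (p i).Prime := fun i => ⟨hp i⟩
  have hcop : Pairwise (Function.onFun Nat.Coprime p) := fun i j hij =>
    (Nat.coprime_primes (hp i) (hp j)).mpr (hmono.injective.ne hij)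
  subst hN
  let φ := ZMod.prodEquivPi p hcop
  have hQR := mem_QRset_pi p _ φ
  have hadj : ∀ a b, (paleyType (∏ i, p i)).Adj a b ↔
      ∀ i, (paleyType (p i)).Adj (φ a i) (φ b i) := by
    intro a b
    rw [paleyType_adj_iff]
    · simp only [hQR, paleyType_adj_prime (h4 _), map_sub, Pi.sub_apply]
    · intro z hz
      rw [hQR] at hz ⊢
      intro i
      simpa using neg_mem_QRset_prime (h4 i) (hz i)
    · intro h
      exact (mem_QRset_prime.mp ((hQR 0).mp h ⟨0, hn⟩)).1 (by simp)
  have hre : Matrix.reindexAlgEquiv ℝ ℝ φ.toEquiv (paleyAdjMatrix (∏ i, p i)) =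
      piKronecker fun i => paleyAdjMatrix (p i) := by
    classical
    ext a b
    simp only [Matrix.coe_reindexAlgEquiv, Matrix.reindex_apply, Matrix.submatrix_apply,
      piKronecker, Matrix.of_apply, paleyAdjMatrix, hadj]
    simp [Finset.prod_boole]
  rw [← AlgEquiv.spectrum_eq (Matrix.reindexAlgEquiv ℝ ℝ φ.toEquiv), hre,
    spectrum_piKronecker _ (fun i => paleyAdjMatrix_isHermitian _) (fun i => paleyEig (p i))
      (fun i => spectrum_paleyAdjMatrix_prime (h4 i)),
    Set.ncard_range_of_injective (prod_paleyEig_injective p hp hmono.injective)]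
  simp
end
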